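/- Let U₁ be the ℂ-algebra generated by x, y, z subject to xy = yx + 2z + 1/2, yz = zy − y, zx = xz − x, and let p = z² − (1/2)z − yx, which is central in U₁. Then U₁ is 1-homogeneous: for each integer d ≥ 1 there is, up to isomorphism, exactly one simple left U₁-module of ℂ-dimension d, and it is annihilated by p − σ_d, where σ_d = (4d² − 1)/16. -/

import Mathlib

noncomputable section

/-- Generators of the free algebra on `x, y, z` (indices `0, 1, 2`). -/
def F3 (i : Fin 3) : FreeAlgebra ℂ (Fin 3) := FreeAlgebra.ι ℂ i

/-- Simplicity of the representation of a ℂ-algebra `R` on `ℂ^d` given by an algebra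
homomorphism `ρ : R → End ℂ (ℂ^d)`: the corresponding `R`-module is nonzero and has no
nontrivial submodules. -/
def SimpleRep (R : Type*) [Ring R] [Algebra ℂ R] (d : ℕ)
    (ρ : R →ₐ[ℂ] Module.End ℂ (Fin d → ℂ)) : Prop :=
  (∃ v : Fin d → ℂ, v ≠ 0) ∧
    ∀ V : Submodule ℂ (Fin d → ℂ), (∀ a : R, ∀ v ∈ V, ρ a v ∈ V) → V = ⊥ ∨ V = ⊤

/-- The defining relations of `U₁`:
`xy = yx + 2z + 1/2`, `yz = zy − y`, `zx = xz − x`. -/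
inductive U1Rel : FreeAlgebra ℂ (Fin 3) → FreeAlgebra ℂ (Fin 3) → Prop
  | rel_xy : U1Rel (F3 0 * F3 1) (F3 1 * F3 0 + 2 * F3 2 + (1/2 : ℂ) • 1)
  | rel_yz : U1Rel (F3 1 * F3 2) (F3 2 * F3 1 - F3 1)
  | rel_zx : U1Rel (F3 2 * F3 0) (F3 0 * F3 2 - F3 0)

/-- The algebra `U₁`. -/
abbrev U1 : Type := RingQuot U1Rel

def U1x : U1 := RingQuot.mkAlgHom ℂ U1Rel (F3 0)
def U1y : U1 := RingQuot.mkAlgHom ℂ U1Rel (F3 1)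
def U1z : U1 := RingQuot.mkAlgHom ℂ U1Rel (F3 2)

/-- The central element `p = z² − (1/2)z − yx` of `U₁`. -/
def U1p : U1 := U1z * U1z - (1/2 : ℂ) • U1z - U1y * U1x

namespace U1

theorem x_mul_y : U1x * U1y = U1y * U1x + 2 * U1z + (1/2 : ℂ) • 1 := by
  simpa [U1x, U1y, U1z, two_mul] using RingQuot.mkAlgHom_rel ℂ U1Rel.rel_xy

theorem y_mul_z : U1y * U1z = U1z * U1y - U1y := by
  simpa [U1y, U1z] using RingQuot.mkAlgHom_rel ℂ U1Rel.rel_yz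

theorem z_mul_x : U1z * U1x = U1x * U1z - U1x := by
  simpa [U1x, U1z] using RingQuot.mkAlgHom_rel ℂ U1Rel.rel_zx

/-- The representation given by a triple of endomorphisms satisfying the relations of `U1`. -/
def lift {M : Type*} [AddCommGroup M] [Module ℂ M] (X Y Z : Module.End ℂ M)
    (hxy : X * Y = Y * X + 2 * Z + (1/2 : ℂ) • 1) (hyz : Y * Z = Z * Y - Y)
    (hzx : Z * X = X * Z - X) : U1 →ₐ[ℂ] Module.End ℂ M :=
  RingQuot.liftAlgHom ℂ ⟨FreeAlgebra.lift ℂ ![X, Y, Z], by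
    intro a b h
    cases h
    · simpa [F3, two_mul] using hxy
    · simpa [F3] using hyz
    · simpa [F3] using hzx⟩

section Lift

variable {M : Type*} [AddCommGroup M] [Module ℂ M] {X Y Z : Module.End ℂ M}
  (hxy : X * Y = Y * X + 2 * Z + (1/2 : ℂ) • 1) (hyz : Y * Z = Z * Y - Y)
  (hzx : Z * X = X * Z - X)

theorem lift_x : lift X Y Z hxy hyz hzx U1x = X := by
  rw [lift, U1x, RingQuot.liftAlgHom_mkAlgHom_apply]
  simp [F3]

theorem lift_y : lift X Y Z hxy hyz hzx U1y = Y := by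
  rw [lift, U1y, RingQuot.liftAlgHom_mkAlgHom_apply]
  simp [F3]

theorem lift_z : lift X Y Z hxy hyz hzx U1z = Z := by
  rw [lift, U1z, RingQuot.liftAlgHom_mkAlgHom_apply]
  simp [F3]

end Lift

section Rep

variable {M N : Type*} [AddCommGroup M] [Module ℂ M] [AddCommGroup N] [Module ℂ N]

/-- A linear map commuting with the generators commutes with the whole of `U1`. -/
theorem intertwines (ρ : U1 →ₐ[ℂ] Module.End ℂ M) (τ : U1 →ₐ[ℂ] Module.End ℂ N)
    (T : M →ₗ[ℂ] N) (hx : T ∘ₗ ρ U1x = τ U1x ∘ₗ T) (hy : T ∘ₗ ρ U1y = τ U1y ∘ₗ T)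
    (hz : T ∘ₗ ρ U1z = τ U1z ∘ₗ T) (a : U1) (v : M) : T (ρ a v) = τ a (T v) := by
  obtain ⟨a, rfl⟩ := RingQuot.mkAlgHom_surjective ℂ U1Rel a
  induction a generalizing v with
  | grade0 r => simp [Algebra.algebraMap_eq_smul_one]
  | grade1 i =>
    fin_cases i
    · exact LinearMap.congr_fun hx v
    · exact LinearMap.congr_fun hy v
    · exact LinearMap.congr_fun hz v
  | mul a b ha hb => simp [ha, hb]
  | add a b ha hb => simp [ha, hb]

variable (ρ : U1 →ₐ[ℂ] Module.End ℂ M)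

theorem x_y_apply (v : M) :
    ρ U1x (ρ U1y v) = ρ U1y (ρ U1x v) + (2 : ℂ) • ρ U1z v + (1/2 : ℂ) • v := by
  have h := LinearMap.congr_fun (congrArg ρ x_mul_y) v
  simpa [two_mul, two_smul] using h

theorem z_y_apply (v : M) : ρ U1z (ρ U1y v) = ρ U1y (ρ U1z v) + ρ U1y v := by
  have h := LinearMap.congr_fun (congrArg ρ y_mul_z) v
  simp only [map_mul, map_sub, Module.End.mul_apply, LinearMap.sub_apply] at h
  rw [h, sub_add_cancel]

theorem z_x_apply (v : M) : ρ U1z (ρ U1x v) = ρ U1x (ρ U1z v) - ρ U1x v := by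
  simpa using LinearMap.congr_fun (congrArg ρ z_mul_x) v

theorem z_y_pow_apply {v : M} {μ : ℂ} (hv : ρ U1z v = μ • v) (k : ℕ) :
    ρ U1z ((ρ U1y ^ k) v) = (μ + k) • (ρ U1y ^ k) v := by
  induction k with
  | zero => simpa using hv
  | succ k ih =>
    rw [pow_succ', Module.End.mul_apply, z_y_apply, ih, map_smul]
    push_cast
    module

theorem z_x_pow_apply {v : M} {μ : ℂ} (hv : ρ U1z v = μ • v) (k : ℕ) :
    ρ U1z ((ρ U1x ^ k) v) = (μ - k) • (ρ U1x ^ k) v := by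
  induction k with
  | zero => simpa using hv
  | succ k ih =>
    rw [pow_succ', Module.End.mul_apply, z_x_apply, ih, map_smul]
    push_cast
    module

theorem x_y_pow_apply {v : M} {μ : ℂ} (hv : ρ U1z v = μ • v) (hx : ρ U1x v = 0) (k : ℕ) :
    ρ U1x ((ρ U1y ^ (k + 1)) v) =
      ((k + 1) * (k + 2 * μ + 1/2) : ℂ) • (ρ U1y ^ k) v := by
  induction k with
  | zero =>
    simp only [zero_add, pow_one, pow_zero, Module.End.one_apply, x_y_apply, hx, hv, map_zero]
    push_cast
    module
  | succ k ih =>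
    rw [pow_succ', Module.End.mul_apply, x_y_apply, ih, map_smul, z_y_pow_apply ρ hv,
      pow_succ', Module.End.mul_apply]
    push_cast
    module

end Rep

/-- Among infinitely many vectors with distinct weights for an endomorphism of a
finite-dimensional space, one vanishes. -/
theorem exists_eq_zero_of_weights {M : Type*} [AddCommGroup M] [Module ℂ M]
    [FiniteDimensional ℂ M] (f : Module.End ℂ M) (μ : ℕ → ℂ) (hμ : Function.Injective μ)
    (v : ℕ → M) (hv : ∀ k, f (v k) = μ k • v k) : ∃ k, v k = 0 := by
  by_contra! h
  have hli := f.eigenvectors_linearIndependent' μ hμ v fun k =>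
    Module.End.hasEigenvector_iff.mpr ⟨Module.End.mem_eigenspace_iff.mpr (hv k), h k⟩
  exact Infinite.not_finite (α := ℕ) hli.finite

/-- A nonzero orbit of a vector that eventually vanishes has a last nonzero term. -/
theorem exists_last_ne_zero {M : Type*} [AddCommGroup M] [Module ℂ M] {f : Module.End ℂ M}
    {v : M} (hv : v ≠ 0) (h : ∃ k, (f ^ k) v = 0) :
    ∃ n, (f ^ n) v ≠ 0 ∧ (f ^ (n + 1)) v = 0 := by
  classical
  obtain ⟨n, hn⟩ : ∃ n, Nat.find h = n + 1 :=
    Nat.exists_eq_succ_of_ne_zero fun h0 => hv (by simpa [h0] using Nat.find_spec h)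
  exact ⟨n, Nat.find_min h (by omega), hn ▸ Nat.find_spec h⟩

theorem exists_lowest_weight {M : Type*} [AddCommGroup M] [Module ℂ M] [FiniteDimensional ℂ M]
    [Nontrivial M] (ρ : U1 →ₐ[ℂ] Module.End ℂ M) :
    ∃ (v : M) (μ : ℂ), v ≠ 0 ∧ ρ U1z v = μ • v ∧ ρ U1x v = 0 := by
  obtain ⟨μ, hμ⟩ := Module.End.exists_eigenvalue (ρ U1z)
  obtain ⟨u, hu⟩ := hμ.exists_hasEigenvector
  obtain ⟨n, hn, hn'⟩ := exists_last_ne_zero hu.2 <|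
    exists_eq_zero_of_weights (ρ U1z) (fun k : ℕ => μ - k)
      (fun a b h => by simpa using h) _ (z_x_pow_apply ρ hu.apply_eq_smul)
  exact ⟨_, _, hn, z_x_pow_apply ρ hu.apply_eq_smul n, by
    rwa [pow_succ', Module.End.mul_apply] at hn'⟩

/-- A lowest weight vector generates a string `v, yv, …, yⁿv` of nonzero vectors with
`yⁿ⁺¹v = 0`, and its length determines the weight. -/
theorem exists_string {M : Type*} [AddCommGroup M] [Module ℂ M] [FiniteDimensional ℂ M]
    [Nontrivial M] (ρ : U1 →ₐ[ℂ] Module.End ℂ M) :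
    ∃ (n : ℕ) (v : M), v ≠ 0 ∧ ρ U1z v = (-(n : ℂ) / 2 - 1/4) • v ∧ ρ U1x v = 0 ∧
      (ρ U1y ^ (n + 1)) v = 0 := by
  obtain ⟨v, μ, hv, hz, hx⟩ := exists_lowest_weight ρ
  obtain ⟨n, hn, hn'⟩ := exists_last_ne_zero hv <|
    exists_eq_zero_of_weights (ρ U1z) (fun k : ℕ => μ + k)
      (fun a b h => by simpa using h) _ (z_y_pow_apply ρ hz)
  have h := x_y_pow_apply ρ hz hx n
  rw [hn', map_zero, eq_comm, smul_eq_zero_iff_left hn, mul_eq_zero] at h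
  have hμ : μ = -(n : ℂ) / 2 - 1/4 := by
    linear_combination (1/2 : ℂ) * h.resolve_left (Nat.cast_add_one_ne_zero n)
  exact ⟨n, v, hv, hμ ▸ hz, hx, hn'⟩

section Standard

variable (d : ℕ)

/-- The standard basis vectors of `ℂ^d`, extended by zero to all natural indices. -/
def stdVec (k : ℕ) : Fin d → ℂ := fun j => if (j : ℕ) = k then 1 else 0

theorem stdVec_val (i : Fin d) : stdVec d i = Pi.single i 1 := by
  ext j
  simp [stdVec, Pi.single_apply, Fin.ext_iff]

theorem stdVec_of_le {k : ℕ} (h : d ≤ k) : stdVec d k = 0 := by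
  ext j
  simp [stdVec, (j.2.trans_le h).ne]

variable {d} in
theorem linearMap_ext {M : Type*} [AddCommGroup M] [Module ℂ M] {f g : (Fin d → ℂ) →ₗ[ℂ] M}
    (h : ∀ k, f (stdVec d k) = g (stdVec d k)) : f = g :=
  LinearMap.pi_ext' fun i => LinearMap.ext_ring (by simpa [stdVec_val] using h i)

variable {d} in
theorem eq_sum_stdVec (v : Fin d → ℂ) : v = ∑ i, v i • stdVec d i := by
  simp_rw [stdVec_val]
  exact pi_eq_sum_univ' v

/-- The lowering operator of the standard representation. -/
def stdX : Module.End ℂ (Fin d → ℂ) where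
  toFun v j := ((j + 1) * (j + 1 - d) : ℂ) * if h : (j : ℕ) + 1 < d then v ⟨j + 1, h⟩ else 0
  map_add' u v := by ext j; by_cases h : (j : ℕ) + 1 < d <;> simp [h, mul_add]
  map_smul' c v := by ext j; by_cases h : (j : ℕ) + 1 < d <;> simp [h, mul_left_comm]

/-- The raising operator of the standard representation. -/
def stdY : Module.End ℂ (Fin d → ℂ) where
  toFun v j := if (j : ℕ) = 0 then 0 else v ⟨j - 1, (Nat.sub_le _ _).trans_lt j.2⟩
  map_add' u v := by ext j; by_cases h : (j : ℕ) = 0 <;> simp [h]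
  map_smul' c v := by ext j; by_cases h : (j : ℕ) = 0 <;> simp [h]

/-- The weight operator of the standard representation. -/
def stdZ : Module.End ℂ (Fin d → ℂ) where
  toFun v j := (j - (d - 1) / 2 - 1/4 : ℂ) * v j
  map_add' u v := by ext j; simp [mul_add]
  map_smul' c v := by ext j; simp [mul_left_comm]

theorem stdX_zero : stdX d (stdVec d 0) = 0 := by
  ext j
  simp [stdX, stdVec]

theorem stdX_succ (k : ℕ) :
    stdX d (stdVec d (k + 1)) = ((k + 1) * (k + 1 - d) : ℂ) • stdVec d k := by
  ext j
  by_cases h : (j : ℕ) = k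
  · by_cases hd : k + 1 < d
    · simp [stdX, stdVec, h, hd]
    · have : d = k + 1 := by omega
      simp [stdX, stdVec, h, this]
  · simp [stdX, stdVec, h]

theorem stdY_stdVec (k : ℕ) : stdY d (stdVec d k) = stdVec d (k + 1) := by
  ext j
  by_cases h : (j : ℕ) = 0
  · simp [stdY, stdVec, h]
  · simp [stdY, stdVec, h, show (j : ℕ) - 1 = k ↔ (j : ℕ) = k + 1 by omega]

theorem stdZ_stdVec (k : ℕ) :
    stdZ d (stdVec d k) = (k - (d - 1) / 2 - 1/4 : ℂ) • stdVec d k := by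
  ext j
  by_cases h : (j : ℕ) = k <;> simp [stdZ, stdVec, h]

/-- The standard `d`-dimensional representation of `U1`. -/
def stdRep : U1 →ₐ[ℂ] Module.End ℂ (Fin d → ℂ) :=
  lift (stdX d) (stdY d) (stdZ d)
    (linearMap_ext fun k => by
      rw [two_mul]
      cases k with
      | zero =>
        simp only [Module.End.mul_apply, LinearMap.add_apply, LinearMap.smul_apply,
          Module.End.one_apply, stdY_stdVec, stdX_succ, stdX_zero, stdZ_stdVec, map_zero]
        push_cast
        module
      | succ k =>
        simp only [Module.End.mul_apply, LinearMap.add_apply, LinearMap.smul_apply,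
          Module.End.one_apply, stdY_stdVec, stdX_succ, stdZ_stdVec, map_smul]
        push_cast
        module)
    (linearMap_ext fun k => by
      simp only [Module.End.mul_apply, LinearMap.sub_apply, stdY_stdVec, stdZ_stdVec, map_smul]
      push_cast
      module)
    (linearMap_ext fun k => by
      cases k with
      | zero =>
        simp [stdX_zero, stdZ_stdVec]
      | succ k =>
        simp only [Module.End.mul_apply, LinearMap.sub_apply, stdX_succ, stdZ_stdVec, map_smul]
        push_cast
        module)

theorem stdRep_x : stdRep d U1x = stdX d := lift_x ..

theorem stdRep_y : stdRep d U1y = stdY d := lift_y ..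

theorem stdRep_z : stdRep d U1z = stdZ d := lift_z ..

theorem stdRep_casimir :
    stdRep d (U1p - algebraMap ℂ U1 ((4 * (d : ℂ) ^ 2 - 1) / 16)) = 0 := by
  refine linearMap_ext fun k => ?_
  simp only [U1p, map_sub, map_mul, map_smul, stdRep_x, stdRep_y, stdRep_z, AlgHom.commutes,
    LinearMap.sub_apply, Module.End.mul_apply, LinearMap.smul_apply, Module.algebraMap_end_apply,
    stdZ_stdVec, LinearMap.zero_apply]
  cases k with
  | zero =>
    simp only [stdX_zero, map_zero]
    push_cast
    module
  | succ k =>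
    simp only [stdX_succ, stdY_stdVec, map_smul]
    push_cast
    module

variable {d}

theorem stdVec_zero_mem {V : Submodule ℂ (Fin d → ℂ)} (hV : ∀ v ∈ V, stdX d v ∈ V) (m : ℕ)
    {v : Fin d → ℂ} (hv : v ∈ V) (hv0 : v ≠ 0) (hm : ∀ j : Fin d, m ≤ j → v j = 0) :
    stdVec d 0 ∈ V := by
  induction m generalizing v with
  | zero => exact absurd (funext fun j => hm j (Nat.zero_le _)) hv0
  | succ m ih =>
    by_cases h : ∀ j : Fin d, m ≤ j → v j = 0
    · exact ih hv hv0 h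
    push Not at h
    obtain ⟨j, hj, hvj⟩ := h
    have hjm : (j : ℕ) = m := by
      by_contra hne
      exact hvj (hm j (by omega))
    cases m with
    | zero =>
      have hv' : v = v j • stdVec d 0 := by
        ext i
        by_cases hi : (i : ℕ) = 0
        · have : i = j := Fin.ext (by omega)
          simp [stdVec, this, hjm]
        · simp [stdVec, hi, hm i (by omega)]
      rw [hv'] at hv
      exact (V.smul_mem_iff hvj).mp hv
    | succ m =>
      refine ih (hV v hv) (fun h0 => ?_) fun i hi => ?_
      · have hlt : m + 1 < d := hjm ▸ j.2
        have hj' : j = ⟨m + 1, hlt⟩ := Fin.ext hjm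
        have h1 := congrFun h0 ⟨m, by omega⟩
        have hne : (m + 1 - d : ℂ) ≠ 0 := by
          rw [sub_ne_zero]
          exact_mod_cast hlt.ne
        simp [stdX, hlt, ← hj', hvj, hne, Nat.cast_add_one_ne_zero] at h1
      · by_cases hlt : (i : ℕ) + 1 < d
        · simp [stdX, hlt, hm ⟨i + 1, hlt⟩ (by simpa using hi)]
        · simp [stdX, hlt]

theorem simpleRep_stdRep (hd : 1 ≤ d) : SimpleRep U1 d (stdRep d) := by
  refine ⟨⟨fun _ => 1, fun h => one_ne_zero (congrFun h ⟨0, hd⟩)⟩, fun V hV => ?_⟩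
  refine or_iff_not_imp_left.mpr fun hbot => ?_
  obtain ⟨v, hv, hv0⟩ := V.ne_bot_iff.mp hbot
  have h0 : stdVec d 0 ∈ V :=
    stdVec_zero_mem (fun v hv => stdRep_x d ▸ hV U1x v hv) d hv hv0 fun j hj => by omega
  have hmem : ∀ k, stdVec d k ∈ V := by
    intro k
    induction k with
    | zero => exact h0
    | succ k ih =>
      rw [← stdY_stdVec, ← stdRep_y]
      exact hV _ _ ih
  refine V.eq_top_iff'.mpr fun w => ?_
  rw [eq_sum_stdVec w]
  exact V.sum_mem fun i _ => V.smul_mem _ (hmem i)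

/-- A lowest weight vector of the right weight killed by `y^d` receives a nonzero
homomorphism from the standard representation. -/
theorem exists_hom_of_string {M : Type*} [AddCommGroup M] [Module ℂ M]
    (ρ : U1 →ₐ[ℂ] Module.End ℂ M) (n : ℕ) {v : M}
    (hz : ρ U1z v = (-(n : ℂ) / 2 - 1/4) • v) (hx : ρ U1x v = 0)
    (hy : (ρ U1y ^ (n + 1)) v = 0) :
    ∃ T : (Fin (n + 1) → ℂ) →ₗ[ℂ] M, T (stdVec (n + 1) 0) = v ∧
      ∀ a w, T (stdRep (n + 1) a w) = ρ a (T w) := by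
  let T : (Fin (n + 1) → ℂ) →ₗ[ℂ] M :=
    Fintype.linearCombination ℂ fun i : Fin (n + 1) => (ρ U1y ^ (i : ℕ)) v
  have hT : ∀ k, T (stdVec (n + 1) k) = (ρ U1y ^ k) v := by
    intro k
    by_cases hk : k < n + 1
    · rw [stdVec_val (n + 1) ⟨k, hk⟩]
      simp [T]
    · obtain ⟨l, rfl⟩ := Nat.exists_eq_add_of_le' (not_lt.mp hk)
      rw [stdVec_of_le _ (by omega), map_zero, pow_add, Module.End.mul_apply, hy, map_zero]
  refine ⟨T, by simpa using hT 0, intertwines _ _ T ?_ ?_ ?_⟩ <;>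
    refine linearMap_ext fun k => ?_ <;>
    simp only [LinearMap.comp_apply, stdRep_x, stdRep_y, stdRep_z]
  · cases k with
    | zero => simp [stdX_zero, hT, hx]
    | succ k =>
      rw [stdX_succ, map_smul, hT, hT, x_y_pow_apply ρ hz hx]
      push_cast
      module
  · rw [stdY_stdVec, hT, hT, pow_succ', Module.End.mul_apply]
  · rw [stdZ_stdVec, map_smul, hT, z_y_pow_apply ρ hz]
    push_cast
    module

theorem exists_equiv_stdRep (hd : 1 ≤ d) {ρ : U1 →ₐ[ℂ] Module.End ℂ (Fin d → ℂ)}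
    (hρ : SimpleRep U1 d ρ) :
    ∃ e : (Fin d → ℂ) ≃ₗ[ℂ] (Fin d → ℂ), ∀ a v, e (stdRep d a v) = ρ a (e v) := by
  have : Nonempty (Fin d) := ⟨⟨0, hd⟩⟩
  obtain ⟨n, v, hv, hz, hx, hy⟩ := exists_string ρ
  obtain ⟨T, hT0, hT⟩ := exists_hom_of_string ρ n hz hx hy
  have hker : LinearMap.ker T = ⊥ := by
    refine ((simpleRep_stdRep n.succ_pos).2 _ fun a w hw => ?_).resolve_right fun h => hv ?_
    · rw [LinearMap.mem_ker] at hw ⊢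
      rw [hT, hw, map_zero]
    · rw [← hT0, LinearMap.ker_eq_top.mp h, LinearMap.zero_apply]
  have hrange : LinearMap.range T = ⊤ := by
    refine (hρ.2 _ fun a w hw => ?_).resolve_left fun h => hv ?_
    · obtain ⟨u, rfl⟩ := hw
      exact ⟨_, hT a u⟩
    · rw [← hT0, LinearMap.range_eq_bot.mp h, LinearMap.zero_apply]
  have hbij : Function.Bijective T :=
    ⟨LinearMap.ker_eq_bot.mp hker, LinearMap.range_eq_top.mp hrange⟩
  obtain rfl : n + 1 = d := by simpa using (LinearEquiv.ofBijective T hbij).finrank_eq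
  exact ⟨LinearEquiv.ofBijective T hbij, hT⟩

end Standard

end U1

/-- `U₁` is 1-homogeneous: for each `d ≥ 1` there is, up to
isomorphism, exactly one simple `U₁`-module of ℂ-dimension `d`, and it is annihilated
by `p − σ_d` where `σ_d = (4d² − 1)/16`. -/
theorem stmt9 :
    ∀ d : ℕ, 1 ≤ d →
      (∃ ρ : U1 →ₐ[ℂ] Module.End ℂ (Fin d → ℂ), SimpleRep U1 d ρ ∧
        ρ (U1p - algebraMap ℂ U1 ((4 * (d : ℂ) ^ 2 - 1) / 16)) = 0) ∧
      (∀ ρ₁ ρ₂ : U1 →ₐ[ℂ] Module.End ℂ (Fin d → ℂ),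
        SimpleRep U1 d ρ₁ → SimpleRep U1 d ρ₂ →
        ∃ e : (Fin d → ℂ) ≃ₗ[ℂ] (Fin d → ℂ),
          ∀ (a : U1) (v : Fin d → ℂ), e (ρ₁ a v) = ρ₂ a (e v)) := by
  intro d hd
  refine ⟨⟨U1.stdRep d, U1.simpleRep_stdRep hd, U1.stdRep_casimir d⟩, fun ρ₁ ρ₂ h₁ h₂ => ?_⟩
  obtain ⟨e₁, he₁⟩ := U1.exists_equiv_stdRep hd h₁
  obtain ⟨e₂, he₂⟩ := U1.exists_equiv_stdRep hd h₂
  refine ⟨e₁.symm.trans e₂, fun a v => ?_⟩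
  obtain ⟨w, rfl⟩ := e₁.surjective v
  simp [← he₁, he₂]


end
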